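/- arXiv:2110.02147 — 4 statements merged into one kernel-verified Lean document; each statement's English description precedes it below -/
import Mathlib

section
/- Let c:ℕ→(0,∞) be nondecreasing with sup_n c_{n+k}/c_n < ∞ for every fixed k∈ℕ, and let T>0. For each letter B∈𝒲₁ (such that 𝒲_n^{B,a} is nonempty for some n) there exist a constant Const(B)>0, an integer K_B∈ℕ and group elements h_B, g_B ∈ G such that for all N>K_B, all t∈(0,T] and all g∈G: Const(B)⁻¹ · φ^{A,a}_{c;≤N−K_B}[t](h_B⁻¹g) ≤ φ^{B,a}_{c;≤N}[t](g) ≤ Const(B) · φ^{A,a}_{c;≤N+K_B}[t](g_B⁻¹g). If moreover T_𝔰 is topologically transitive, one may take g_B = h_B = e. -/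
open scoped ENNReal NNReal BigOperators
open Filter MeasureTheory

namespace CMS

variable {W : Type*} {G : Type*}

/-- One-sided countable Markov shift determined by the transition matrix `τ`. -/
def SigmaPlus (τ : W → W → Prop) : Set (ℕ → W) :=
  {x | ∀ i, τ (x i) (x (i + 1))}

/-- Two-sided shift space determined by the transition matrix `τ`. -/
def SigmaZ (τ : W → W → Prop) : Set (ℤ → W) :=
  {x | ∀ i, τ (x i) (x (i + 1))}

/-- The left shift on one-sided sequences. -/
def shift (x : ℕ → W) : ℕ → W := fun i => x (i + 1)

/-- The left shift on two-sided sequences. -/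
def shiftZ (x : ℤ → W) : ℤ → W := fun i => x (i + 1)

/-- `weight R n x = R(x) R(σ x) ⋯ R(σ^{n-1} x)`, the multiplicative Birkhoff weight `R_n`. -/
noncomputable def weight (R : (ℕ → W) → ℝ) (n : ℕ) (x : ℕ → W) : ℝ :=
  ∏ i ∈ Finset.range n, R (shift^[i] x)

/-- A finite word occurs somewhere inside a point of `Σ⁺`: admissibility. -/
def Occurs (τ : W → W → Prop) (w : List W) : Prop :=
  ∃ x ∈ SigmaPlus τ, ∃ k : ℕ, ∀ i : Fin w.length, x (k + i) = w.get i

/-- `𝒲_n^{B,b}` : admissible words of length `n`, first letter `B`, last letter `b`. -/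
def WordSet (τ : W → W → Prop) (n : ℕ) (B b : W) : Set (List W) :=
  {w | w.length = n ∧ Occurs τ w ∧ w.head? = some B ∧ w.getLast? = some b}

/-- Same, with admissibility given by consecutive allowed transitions
(as used for subshifts of finite type). -/
def WordSetC (τ : W → W → Prop) (n : ℕ) (B b : W) : Set (List W) :=
  {w | w.length = n ∧ w.Chain' τ ∧ w.head? = some B ∧ w.getLast? = some b}

/-- Concatenation `w x` of a finite word with a one-sided point. -/
def cat (w : List W) (x : ℕ → W) : ℕ → W := fun i =>
  if h : i < w.length then w.get ⟨i, h⟩ else x (i - w.length)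

/-- `𝔰̲(w) = 𝔰(w₁)⋯𝔰(w_n)`. -/
def wprod [Monoid G] (s : W → G) (w : List W) : G := (w.map s).prod

/-- Topological mixing of a countable Markov shift, stated combinatorially. -/
def Mixing (τ : W → W → Prop) : Prop :=
  ∀ B b : W, ∃ N : ℕ, ∀ n, N ≤ n → (WordSet τ n B b).Nonempty

/-- `log R` is locally Hölder with constants `C₀`, `θ`. -/
def LocallyHolder (τ : W → W → Prop) (R : (ℕ → W) → ℝ) (C₀ θ : ℝ) : Prop :=
  0 < C₀ ∧ 0 < θ ∧ θ < 1 ∧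
    ∀ x ∈ SigmaPlus τ, ∀ y ∈ SigmaPlus τ, ∀ n : ℕ, 2 ≤ n →
      (∀ i < n, x i = y i) → |Real.log (R x) - Real.log (R y)| ≤ C₀ * θ ^ n

/-- `Σ_{x∈[B], σⁿx=x} R_n(x)`. -/
noncomputable def Zper (τ : W → W → Prop) (R : (ℕ → W) → ℝ) (B : W) (n : ℕ) : ℝ≥0∞ :=
  ∑' p : {x : ℕ → W // x ∈ SigmaPlus τ ∧ shift^[n] x = x ∧ x 0 = B},
    ENNReal.ofReal (weight R n p.1)

/-- First-return version: `Σ {R_n(x) : x∈[B], σⁿx=x, x_i ≠ B for 0<i<n}`. -/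
noncomputable def ZperFR (τ : W → W → Prop) (R : (ℕ → W) → ℝ) (B : W) (n : ℕ) : ℝ≥0∞ :=
  ∑' p : {x : ℕ → W // x ∈ SigmaPlus τ ∧ shift^[n] x = x ∧ x 0 = B ∧
      ∀ i, 0 < i → i < n → x i ≠ B},
    ENNReal.ofReal (weight R n p.1)

/-- Periodic sums for the group extension, restricted to orbits whose
group displacement `𝔰̲(x₀⋯x_{n-1})` lies in `C`. -/
noncomputable def ZperExt [Monoid G] (τ : W → W → Prop) (R : (ℕ → W) → ℝ)
    (s : W → G) (C : Set G) (B : W) (n : ℕ) : ℝ≥0∞ :=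
  ∑' p : {x : ℕ → W // x ∈ SigmaPlus τ ∧ shift^[n] x = x ∧ x 0 = B ∧
      (List.ofFn fun i : Fin n => s (x i)).prod ∈ C},
    ENNReal.ofReal (weight R n p.1)

/-- Exponential growth rate `limsup Z_n^{1/n}`; equals `exp` of the Gurevič pressure. -/
noncomputable def growthRate (Z : ℕ → ℝ≥0∞) : ℝ≥0∞ :=
  Filter.limsup (fun n => Z n ^ (1 / (n : ℝ))) Filter.atTop

/-- positive recurrence of `R` in the sense of Sarig. -/
def PositiveRecurrent (τ : W → W → Prop) (R : (ℕ → W) → ℝ) : Prop :=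
  ∀ B : W, ∃ M : ℝ, 1 ≤ M ∧ ∀ n : ℕ, 1 ≤ n →
    (ENNReal.ofReal M)⁻¹ ≤ Zper τ R B n ∧ Zper τ R B n ≤ ENNReal.ofReal M

/-- Topological transitivity of the group extension `T_𝔰`, stated combinatorially. -/
def ExtTransitive [Group G] (τ : W → W → Prop) (s : W → G) : Prop :=
  ∀ B b : W, ∀ g : G, ∃ n : ℕ, ∃ w ∈ WordSet τ n B b, wprod s w = g

/-- Topological transitivity of the quotient extension `T_{𝔰_H}`. -/
def ExtTransitiveQ [Group G] (τ : W → W → Prop) (s : W → G) (H : Subgroup G) : Prop :=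
  ∀ B b : W, ∀ q : G ⧸ H, ∃ n : ℕ, ∃ w ∈ WordSet τ n B b,
    (QuotientGroup.mk (wprod s w) : G ⧸ H) = q

/-- The permutation of the canonical basis (indexed by the cosets in a countable
direct sum of quotients `G⧸H_j`) induced by a group element. -/
def rhoIdx [Group G] {J : Type*} (Hfam : J → Subgroup G) (g : G)
    (i : Σ j, G ⧸ Hfam j) : Σ j, G ⧸ Hfam j :=
  ⟨i.1, g • i.2⟩

/-- The convolution `φ ∗_ρ f = Σ_h φ(h) ρ(h) f`, in coordinates, where the
representation `ρ` permutes the basis indexed by `I` via `act`. -/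
noncomputable def convE {I : Type*} [Group G] (act : G → I → I)
    (φ : G → ℝ≥0∞) (f : I → ℝ≥0∞) : I → ℝ≥0∞ :=
  fun i => ∑' h : G, φ h * f (act h⁻¹ i)

/-- inner product of two nonnegative-cone vectors, in coordinates. -/
noncomputable def innerE {I : Type*} (u v : I → ℝ≥0∞) : ℝ≥0∞ := ∑' i, u i * v i

noncomputable def normSqE {I : Type*} (u : I → ℝ≥0∞) : ℝ≥0∞ := innerE u u

/-- membership in the Hilbert space (finite ℓ² norm): together with
nonnegativity of coordinates this is membership in the cone `𝓗₊`. -/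
def MemL2 {I : Type*} (f : I → ℝ≥0∞) : Prop := normSqE f < ⊤

/-- `φ*(g) = φ(g⁻¹)`. -/
def phiStar [Group G] (φ : G → ℝ≥0∞) : G → ℝ≥0∞ := fun g => φ g⁻¹

/-- The partial thermodynamic `G`-density
`φ^{B,a}_{c;≤N}[t](g) = Σ_{n=1}^N t^{-n} c_n Σ{R_n(wx) : w ∈ 𝒲_n^{B,a}, 𝔰̲(w)=g}`. -/
noncomputable def phiLe [Group G] (τ : W → W → Prop) (R : (ℕ → W) → ℝ) (s : W → G)
    (B a : W) (x : ℕ → W) (c : ℕ → ℝ) (t : ℝ) (N : ℕ) (g : G) : ℝ≥0∞ :=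
  ∑ n ∈ Finset.Icc 1 N, (ENNReal.ofReal t)⁻¹ ^ n * ENNReal.ofReal (c n) *
    ∑' w : {w : List W // w ∈ WordSet τ n B a ∧ wprod s w = g},
      ENNReal.ofReal (weight R n (cat w.1 x))

/-- Same with chain-admissibility (for subshifts of finite type). -/
noncomputable def phiLeC [Group G] (τ : W → W → Prop) (R : (ℕ → W) → ℝ) (s : W → G)
    (B a : W) (x : ℕ → W) (c : ℕ → ℝ) (t : ℝ) (N : ℕ) (g : G) : ℝ≥0∞ :=
  ∑ n ∈ Finset.Icc 1 N, (ENNReal.ofReal t)⁻¹ ^ n * ENNReal.ofReal (c n) *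
    ∑' w : {w : List W // w ∈ WordSetC τ n B a ∧ wprod s w = g},
      ENNReal.ofReal (weight R n (cat w.1 x))

/-- `γ(φ ∗_ρ f)`, the decay exponent for `f`. -/
noncomputable def gammaNorm {I : Type*} [Group G] (act : G → I → I)
    (τ : W → W → Prop) (R : (ℕ → W) → ℝ) (s : W → G) (A a : W) (x : ℕ → W)
    (f : I → ℝ≥0∞) : ℝ :=
  sInf {t : ℝ | 0 < t ∧
    (⨆ N, normSqE (convE act (phiLe τ R s A a x (fun _ => 1) t N) f)) < ⊤}

/-- `γ(f)`, defined through `⟨φ_{≤N}[t] ∗_ρ f, f⟩`. -/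
noncomputable def gammaInner {I : Type*} [Group G] (act : G → I → I)
    (τ : W → W → Prop) (R : (ℕ → W) → ℝ) (s : W → G) (A a : W) (x : ℕ → W)
    (f : I → ℝ≥0∞) : ℝ :=
  sInf {t : ℝ | 0 < t ∧
    (⨆ N, innerE (convE act (phiLe τ R s A a x (fun _ => 1) t N) f) f) < ⊤}

/-- `γ(φ* ∗_ρ f)`, defined through `⟨φ_{≤N}[t] ∗_ρ f, φ*_{≤N}[t] ∗_ρ f⟩`. -/
noncomputable def gammaPairStar {I : Type*} [Group G] (act : G → I → I)
    (τ : W → W → Prop) (R : (ℕ → W) → ℝ) (s : W → G) (A a : W) (x : ℕ → W)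
    (f : I → ℝ≥0∞) : ℝ :=
  sInf {t : ℝ | 0 < t ∧
    (⨆ N, innerE (convE act (phiLe τ R s A a x (fun _ => 1) t N) f)
      (convE act (phiStar (phiLe τ R s A a x (fun _ => 1) t N)) f)) < ⊤}

/-- Left translation action on `G` (for the left regular representation). -/
def leftMul (G : Type*) [Group G] : G → G → G := fun g x => g * x

/-- `δ_e`, the indicator of the identity. -/
noncomputable def deltaE (G : Type*) [Group G] : G → ℝ≥0∞ :=
  Set.indicator {(1 : G)} fun _ => (1 : ℝ≥0∞)

/-- The representation determined by the index action `act` has almost invariant vectors,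
i.e. weakly contains the trivial representation. -/
def HasAlmostInvariantVectors {I : Type*} [Group G] (act : G → I → I) : Prop :=
  ∀ F : Finset G, ∀ ε : ℝ, 0 < ε → ∃ v : I → ℝ,
    Summable (fun i => v i ^ 2) ∧ (∑' i, v i ^ 2) = 1 ∧
      ∀ g ∈ F, (∑' i, (v (act g⁻¹ i) - v i) ^ 2) ≤ ε ^ 2

/-- Amenability of a countable discrete group, via almost invariant vectors of
the left regular representation. -/
def Amenable (G : Type*) [Group G] : Prop :=
  HasAlmostInvariantVectors (leftMul G)

/-- Slowly increasing function. -/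
def SlowlyIncreasing (c : ℕ → ℝ) : Prop :=
  (∀ n, 0 < c n) ∧ Monotone c ∧ Tendsto c atTop atTop ∧
    ∀ k : ℕ, Tendsto (fun n => c (n + k) / c n) atTop (nhds 1)

/-- Cylinder set `[w]` in `Σ⁺`. -/
def cylP (τ : W → W → Prop) (w : List W) : Set {x : ℕ → W // x ∈ SigmaPlus τ} :=
  {x | ∀ i : Fin w.length, x.1 i = w.get i}

/-- `w ∧ x`: the number of initial coordinates in which a word agrees
with a one-sided point. -/
noncomputable def agreeLen (w : List W) (x : ℕ → W) : ℕ :=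
  sSup {k | w.take k = (List.range k).map x}

/-- The shift on the one-sided shift space. -/
def shiftPS (τ : W → W → Prop) (x : {y : ℕ → W // y ∈ SigmaPlus τ}) :
    {y : ℕ → W // y ∈ SigmaPlus τ} :=
  ⟨shift x.1, fun i => x.2 (i + 1)⟩

/-- The shift on the two-sided shift space. -/
def shiftZS (τ : W → W → Prop) (x : {y : ℤ → W // y ∈ SigmaZ τ}) :
    {y : ℤ → W // y ∈ SigmaZ τ} :=
  ⟨shiftZ x.1, fun i => x.2 (i + 1)⟩

/-- Negative-coordinate cylinder `[w.]` in the two-sided shift. -/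
def negCyl (τ : W → W → Prop) (w : List W) : Set {x : ℤ → W // x ∈ SigmaZ τ} :=
  {x | ∀ i : Fin w.length, x.1 (-(w.length : ℤ) + (i : ℕ)) = w.get i}

/-!
Prepending a fixed word `u` that leads from `E` to `D` maps `𝒲_n^{D,a}` injectively into
`𝒲_{n+|u|}^{E,a}` and multiplies group labels on the left by `𝔰̲(u)`. The cocycle identity for the
weights turns this into a factor `R_{|u|}(uwx)`, which is bounded below because `uwx` ranges over
the cylinder `[uD]`. The power of `t` costs `t^{|u|} ≤ T^{|u|}`, and the coefficients only grow.
Hence the density at `D` is dominated by a translate of the density at `E`; the two inequalities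
come from a word leading from `B` to `A` and one leading from `A` to `B`. If the extension is
transitive, both words can be chosen with trivial label.
-/

variable {τ : W → W → Prop} {R : (ℕ → W) → ℝ} {s : W → G} {u w : List W} {x y z : ℕ → W}
  {a B D E : W} {m n : ℕ}

section Concatenation

lemma shift_iterate_apply (x : ℕ → W) (k i : ℕ) : shift^[k] x i = x (k + i) := by
  induction k generalizing i with
  | zero => simp
  | succ k ih =>
    rw [Function.iterate_succ_apply', shift, ih]
    congr 1
    omega

lemma shift_iterate_mem (hx : x ∈ SigmaPlus τ) (k : ℕ) : shift^[k] x ∈ SigmaPlus τ := fun i => by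
  simpa only [shift_iterate_apply, add_assoc] using hx (k + i)

lemma cat_of_lt (w : List W) (x : ℕ → W) {i : ℕ} (hi : i < w.length) : cat w x i = w[i] := by
  simp [cat, hi]

lemma cat_length_add (w : List W) (x : ℕ → W) (i : ℕ) : cat w x (w.length + i) = x i := by
  simp [cat]

lemma shift_iterate_length_cat (w : List W) (x : ℕ → W) : shift^[w.length] (cat w x) = x := by
  funext i
  rw [shift_iterate_apply, cat_length_add]

lemma cat_append (u w : List W) (x : ℕ → W) : cat (u ++ w) x = cat u (cat w x) := by
  funext i
  rcases lt_or_ge i u.length with hi | hi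
  · rw [cat_of_lt _ _ hi, cat_of_lt _ _ (by simp; omega), List.getElem_append_left hi]
  · obtain ⟨j, rfl⟩ := Nat.exists_eq_add_of_le hi
    simp [cat, Nat.add_sub_add_left]

lemma cat_eq_cat_of_le (u : List W) (hyz : y 0 = z 0) {i : ℕ} (hi : i ≤ u.length) :
    cat u y i = cat u z i := by
  rcases hi.lt_or_eq with hi | rfl
  · rw [cat_of_lt _ _ hi, cat_of_lt _ _ hi]
  · exact (cat_length_add u y 0).trans (hyz.trans (cat_length_add u z 0).symm)

lemma cat_mem_of_cat_mem (hy : cat u y ∈ SigmaPlus τ) (hz : z ∈ SigmaPlus τ) (hyz : y 0 = z 0) :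
    cat u z ∈ SigmaPlus τ := fun i => by
  rcases lt_or_ge i u.length with hi | hi
  · rw [← cat_eq_cat_of_le u hyz hi.le, ← cat_eq_cat_of_le u hyz hi]
    exact hy i
  · obtain ⟨j, rfl⟩ := Nat.exists_eq_add_of_le hi
    rw [add_assoc, cat_length_add, cat_length_add]
    exact hz j

end Concatenation

section Admissibility

lemma occurs_iff_exists_cat_mem : Occurs τ w ↔ ∃ z, cat w z ∈ SigmaPlus τ := by
  constructor
  · rintro ⟨y, hy, k, hyw⟩
    refine ⟨shift^[k + w.length] y, ?_⟩
    convert shift_iterate_mem hy k using 1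
    funext i
    rw [shift_iterate_apply]
    rcases lt_or_ge i w.length with hi | hi
    · rw [cat_of_lt _ _ hi]
      exact (hyw ⟨i, hi⟩).symm
    · obtain ⟨j, rfl⟩ := Nat.exists_eq_add_of_le hi
      rw [cat_length_add, shift_iterate_apply, add_assoc]
  · rintro ⟨z, hz⟩
    exact ⟨cat w z, hz, 0, fun i => by rw [zero_add, cat_of_lt _ _ i.2, List.get_eq_getElem]⟩

lemma cat_mem_of_occurs (hu : Occurs τ (u ++ [z 0])) (hz : z ∈ SigmaPlus τ) :
    cat u z ∈ SigmaPlus τ := by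
  obtain ⟨y, hy⟩ := occurs_iff_exists_cat_mem.1 hu
  rw [cat_append] at hy
  exact cat_mem_of_cat_mem hy hz rfl

lemma occurs_append_cons (hu : Occurs τ (u ++ [D])) (hw : Occurs τ (D :: w)) :
    Occurs τ (u ++ D :: w) := by
  obtain ⟨z, hz⟩ := occurs_iff_exists_cat_mem.1 hw
  refine occurs_iff_exists_cat_mem.2 ⟨z, ?_⟩
  rw [cat_append]
  exact cat_mem_of_occurs hu hz

lemma append_mem_wordSet (hu : u ++ [D] ∈ WordSet τ m E D) (hw : w ∈ WordSet τ n D a) :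
    u ++ w ∈ WordSet τ (u.length + n) E a := by
  obtain ⟨-, hu_occurs, hu_head, -⟩ := hu
  obtain ⟨rfl, hw_occurs, hw_head, hw_last⟩ := hw
  obtain ⟨w, rfl⟩ := List.head?_eq_some_iff.1 hw_head
  refine ⟨List.length_append, occurs_append_cons hu_occurs hw_occurs, ?_, ?_⟩
  · simpa only [List.head?_append, List.head?_cons] using hu_head
  · rw [List.getLast?_append, hw_last, Option.some_or]

lemma cat_mem_of_mem_wordSet (hw : w ∈ WordSet τ n D a) (hax : Occurs τ [a, x 0])
    (hx : x ∈ SigmaPlus τ) : cat w x ∈ SigmaPlus τ := by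
  obtain ⟨-, hw_occurs, -, hw_last⟩ := hw
  obtain ⟨v, rfl⟩ := List.getLast?_eq_some_iff.1 hw_last
  refine cat_mem_of_occurs ?_ hx
  rw [List.append_assoc]
  exact occurs_append_cons hw_occurs hax

lemma cat_zero_of_mem_wordSet (hw : w ∈ WordSet τ n D a) (x : ℕ → W) : cat w x 0 = D := by
  obtain ⟨v, rfl⟩ := List.head?_eq_some_iff.1 hw.2.2.1
  exact cat_of_lt _ _ (by simp)

lemma exists_append_singleton_of_mem_wordSet (hw : w ∈ WordSet τ n E D) :
    ∃ u, w = u ++ [D] ∧ u ++ [D] ∈ WordSet τ n E D := by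
  obtain ⟨u, rfl⟩ := List.getLast?_eq_some_iff.1 hw.2.2.2
  exact ⟨u, rfl, hw⟩

/-- Topological transitivity of a countable Markov shift, stated combinatorially as in `Mixing`. -/
def TopTransitive (τ : W → W → Prop) : Prop :=
  ∀ B b : W, ∃ n : ℕ, (WordSet τ n B b).Nonempty

lemma Mixing.topTransitive (hmix : Mixing τ) : TopTransitive τ := fun B b =>
  let ⟨N, hN⟩ := hmix B b
  ⟨N, hN N le_rfl⟩

lemma TopTransitive.exists_append_mem_wordSet (hτ : TopTransitive τ) (E D : W) :
    ∃ n u, u ++ [D] ∈ WordSet τ n E D := by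
  obtain ⟨n, w, hw⟩ := hτ E D
  obtain ⟨u, -, hu⟩ := exists_append_singleton_of_mem_wordSet hw
  exact ⟨n, u, hu⟩

lemma ExtTransitive.exists_append_mem_wordSet [Group G] (hs : ExtTransitive τ s) (E D : W) (g : G) :
    ∃ n u, u ++ [D] ∈ WordSet τ n E D ∧ wprod s u = g := by
  obtain ⟨n, w, hw, hwg⟩ := hs E D (g * s D)
  obtain ⟨u, rfl, hu⟩ := exists_append_singleton_of_mem_wordSet hw
  exact ⟨n, u, hu, by simpa [wprod] using hwg⟩

end Admissibility

section Weight

/-- `R` is bounded away from zero on each cylinder of length two, with a bound that may depend on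
the cylinder. It ensures that prepending a fixed word changes weights by a factor bounded below. -/
def BoundedBelowOnCylinders (τ : W → W → Prop) (R : (ℕ → W) → ℝ) : Prop :=
  ∀ B b : W, ∃ q : ℝ, 0 < q ∧ ∀ z ∈ SigmaPlus τ, z 0 = B → z 1 = b → q ≤ R z

lemma LocallyHolder.boundedBelowOnCylinders {C₀ θ : ℝ} (hH : LocallyHolder τ R C₀ θ)
    (hR : ∀ x ∈ SigmaPlus τ, 0 < R x) : BoundedBelowOnCylinders τ R := by
  intro B b
  by_cases hne : ∃ y ∈ SigmaPlus τ, y 0 = B ∧ y 1 = b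
  · obtain ⟨y, hy, rfl, rfl⟩ := hne
    refine ⟨R y * Real.exp (-(C₀ * θ ^ 2)), mul_pos (hR y hy) (Real.exp_pos _), ?_⟩
    intro z hz h0 h1
    have hlog : |Real.log (R y) - Real.log (R z)| ≤ C₀ * θ ^ 2 :=
      hH.2.2.2 y hy z hz 2 le_rfl fun i hi => by interval_cases i <;> simp only [h0, h1]
    calc R y * Real.exp (-(C₀ * θ ^ 2))
        = Real.exp (Real.log (R y) - C₀ * θ ^ 2) := by
          rw [sub_eq_add_neg, Real.exp_add, Real.exp_log (hR y hy)]
      _ ≤ Real.exp (Real.log (R z)) := Real.exp_le_exp.2 (by linarith [(abs_le.1 hlog).2])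
      _ = R z := Real.exp_log (hR z hz)
  · exact ⟨1, one_pos, fun z hz h0 h1 => (hne ⟨z, hz, h0, h1⟩).elim⟩

lemma BoundedBelowOnCylinders.pos (hR : BoundedBelowOnCylinders τ R) (hx : x ∈ SigmaPlus τ) :
    0 < R x :=
  let ⟨_, hq, hle⟩ := hR (x 0) (x 1)
  hq.trans_le (hle x hx rfl rfl)

lemma weight_nonneg (hR : ∀ x ∈ SigmaPlus τ, 0 ≤ R x) (hx : x ∈ SigmaPlus τ) (n : ℕ) :
    0 ≤ weight R n x :=
  Finset.prod_nonneg fun i _ => hR _ (shift_iterate_mem hx i)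

lemma weight_add (R : (ℕ → W) → ℝ) (k n : ℕ) (x : ℕ → W) :
    weight R (k + n) x = weight R k x * weight R n (shift^[k] x) := by
  simp only [weight, Finset.prod_range_add, ← Function.iterate_add_apply, add_comm]

lemma BoundedBelowOnCylinders.exists_le_weight_cat (hR : BoundedBelowOnCylinders τ R)
    (u : List W) (D : W) :
    ∃ q : ℝ, 0 < q ∧
      ∀ z, cat u z ∈ SigmaPlus τ → z 0 = D → q ≤ weight R u.length (cat u z) := by
  choose q hq hle using hR
  let p : ℕ → W := cat u fun _ => D
  refine ⟨∏ i ∈ Finset.range u.length, q (p i) (p (i + 1)),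
    Finset.prod_pos fun _ _ => hq _ _, fun z hz hzD => ?_⟩
  refine Finset.prod_le_prod (fun _ _ => (hq _ _).le) fun i hi => ?_
  have hi : i < u.length := Finset.mem_range.1 hi
  refine hle _ _ _ (shift_iterate_mem hz i) ?_ ?_ <;> rw [shift_iterate_apply]
  exacts [cat_eq_cat_of_le u hzD hi.le, cat_eq_cat_of_le u hzD hi]

lemma BoundedBelowOnCylinders.exists_mul_weight_le_weight_append
    (hR : BoundedBelowOnCylinders τ R) (hax : Occurs τ [a, x 0]) (hx : x ∈ SigmaPlus τ)
    (hu : u ++ [D] ∈ WordSet τ m E D) :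
    ∃ q : ℝ, 0 < q ∧ ∀ n, ∀ w ∈ WordSet τ n D a,
      q * weight R n (cat w x) ≤ weight R (u.length + n) (cat (u ++ w) x) := by
  obtain ⟨q, hq, hle⟩ := hR.exists_le_weight_cat u D
  refine ⟨q, hq, fun n w hw => ?_⟩
  have hwx : cat w x ∈ SigmaPlus τ := cat_mem_of_mem_wordSet hw hax hx
  have huwx : cat u (cat w x) ∈ SigmaPlus τ := by
    rw [← cat_append]
    exact cat_mem_of_mem_wordSet (append_mem_wordSet hu hw) hax hx
  rw [cat_append, weight_add, shift_iterate_length_cat]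
  exact mul_le_mul_of_nonneg_right (hle _ huwx (cat_zero_of_mem_wordSet hw x))
    (weight_nonneg (fun y hy => (hR.pos hy).le) hwx n)

end Weight

section Density

/-- The sum `Σ {R_n(wx) : w ∈ 𝒲_n^{B,a}, 𝔰̲(w) = g}` over words of length `n` whose weighted
series is `phiLe`. -/
noncomputable def wordSum [Monoid G] (τ : W → W → Prop) (R : (ℕ → W) → ℝ) (s : W → G)
    (B a : W) (x : ℕ → W) (n : ℕ) (g : G) : ℝ≥0∞ :=
  ∑' w : {w : List W // w ∈ WordSet τ n B a ∧ wprod s w = g},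
    ENNReal.ofReal (weight R n (cat w.1 x))

lemma mul_wordSum_le_wordSum_append [Monoid G] {q : ℝ} (hq : 0 ≤ q)
    (hu : u ++ [D] ∈ WordSet τ m E D) (hle : ∀ w ∈ WordSet τ n D a,
      q * weight R n (cat w x) ≤ weight R (u.length + n) (cat (u ++ w) x)) (g : G) :
    ENNReal.ofReal q * wordSum τ R s D a x n g ≤
      wordSum τ R s E a x (u.length + n) (wprod s u * g) := by
  let prepend (w : {w : List W // w ∈ WordSet τ n D a ∧ wprod s w = g}) :
      {w : List W // w ∈ WordSet τ (u.length + n) E a ∧ wprod s w = wprod s u * g} :=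
    ⟨u ++ w.1, append_mem_wordSet hu w.2.1, by
      simp only [← w.2.2, wprod, List.map_append, List.prod_append]⟩
  have prepend_injective : Function.Injective prepend := fun v w h =>
    Subtype.ext (List.append_cancel_left (congrArg Subtype.val h))
  rw [wordSum, ← ENNReal.tsum_mul_left]
  refine le_trans (ENNReal.tsum_le_tsum fun w => ?_)
    (ENNReal.tsum_comp_le_tsum_of_injective prepend_injective _)
  rw [← ENNReal.ofReal_mul hq]
  exact ENNReal.ofReal_le_ofReal (hle w.1 w.2.1)

lemma sum_Icc_one_add_le {M : Type*} [AddCommMonoid M] [PartialOrder M] [IsOrderedAddMonoid M]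
    [CanonicallyOrderedAdd M] (f : ℕ → M) (k N : ℕ) :
    ∑ n ∈ Finset.Icc 1 N, f (k + n) ≤ ∑ n ∈ Finset.Icc 1 (N + k), f n := by
  have hmap : ∑ n ∈ Finset.Icc 1 N, f (k + n) = ∑ n ∈ Finset.Icc (k + 1) (k + N), f n := by
    rw [← Finset.map_add_left_Icc, Finset.sum_map]
    rfl
  rw [hmap, add_comm N k]
  exact Finset.sum_le_sum_of_subset (Finset.Icc_subset_Icc_left (by omega))

variable [Group G]

lemma phiLe_eq_sum_wordSum (τ : W → W → Prop) (R : (ℕ → W) → ℝ) (s : W → G)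
    (B a : W) (x : ℕ → W) (c : ℕ → ℝ) (t : ℝ) (N : ℕ) (g : G) :
    phiLe τ R s B a x c t N g = ∑ n ∈ Finset.Icc 1 N,
      (ENNReal.ofReal t)⁻¹ ^ n * ENNReal.ofReal (c n) * wordSum τ R s B a x n g :=
  rfl

lemma phiLe_mono (τ : W → W → Prop) (R : (ℕ → W) → ℝ) (s : W → G)
    (B a : W) (x : ℕ → W) (c : ℕ → ℝ) (t : ℝ) (g : G) :
    Monotone fun N => phiLe τ R s B a x c t N g := fun _ _ h =>
  Finset.sum_le_sum_of_subset (Finset.Icc_subset_Icc_right h)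

lemma exists_mul_phiLe_le_phiLe (hR : BoundedBelowOnCylinders τ R) (hax : Occurs τ [a, x 0])
    (hx : x ∈ SigmaPlus τ) {c : ℕ → ℝ} (hc : Monotone c) (hu : u ++ [D] ∈ WordSet τ m E D) :
    ∃ q : ℝ, 0 < q ∧ ∀ (N : ℕ) (t : ℝ) (g : G),
      (ENNReal.ofReal t)⁻¹ ^ u.length * ENNReal.ofReal q * phiLe τ R s D a x c t N g ≤
        phiLe τ R s E a x c t (N + u.length) (wprod s u * g) := by
  obtain ⟨q, hq, hle⟩ := hR.exists_mul_weight_le_weight_append hax hx hu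
  refine ⟨q, hq, fun N t g => ?_⟩
  rw [phiLe_eq_sum_wordSum, phiLe_eq_sum_wordSum, Finset.mul_sum]
  refine le_trans (Finset.sum_le_sum fun n _ => ?_) (sum_Icc_one_add_le _ u.length N)
  calc (ENNReal.ofReal t)⁻¹ ^ u.length * ENNReal.ofReal q *
        ((ENNReal.ofReal t)⁻¹ ^ n * ENNReal.ofReal (c n) * wordSum τ R s D a x n g)
      = (ENNReal.ofReal t)⁻¹ ^ (u.length + n) * ENNReal.ofReal (c n) *
        (ENNReal.ofReal q * wordSum τ R s D a x n g) := by ring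
    _ ≤ (ENNReal.ofReal t)⁻¹ ^ (u.length + n) * ENNReal.ofReal (c (u.length + n)) *
        wordSum τ R s E a x (u.length + n) (wprod s u * g) := by
      gcongr
      · exact hc le_add_self
      · exact mul_wordSum_le_wordSum_append hq.le hu (hle n) g

lemma exists_inv_mul_phiLe_le_phiLe (hR : BoundedBelowOnCylinders τ R) (hax : Occurs τ [a, x 0])
    (hx : x ∈ SigmaPlus τ) {c : ℕ → ℝ} (hc : Monotone c) {T : ℝ} (hT : 0 < T)
    (hu : u ++ [D] ∈ WordSet τ m E D) :
    ∃ C : ℝ, 0 < C ∧ ∀ (N : ℕ) (t : ℝ) (g : G), t ≤ T →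
      (ENNReal.ofReal C)⁻¹ * phiLe τ R s D a x c t N g ≤
        phiLe τ R s E a x c t (N + u.length) (wprod s u * g) := by
  obtain ⟨q, hq, hle⟩ := exists_mul_phiLe_le_phiLe (s := s) hR hax hx hc hu
  refine ⟨T ^ u.length / q, by positivity, fun N t g htT => le_trans ?_ (hle N t g)⟩
  gcongr
  calc (ENNReal.ofReal (T ^ u.length / q))⁻¹
      = (ENNReal.ofReal T)⁻¹ ^ u.length * ENNReal.ofReal q := by
        rw [← ENNReal.ofReal_inv_of_pos (by positivity), inv_div, div_eq_inv_mul,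
          ENNReal.ofReal_mul (by positivity), ENNReal.ofReal_inv_of_pos (by positivity),
          ENNReal.ofReal_pow hT.le, ENNReal.inv_pow]
    _ ≤ (ENNReal.ofReal t)⁻¹ ^ u.length * ENNReal.ofReal q := by gcongr

lemma exists_phiLe_comparison (hR : BoundedBelowOnCylinders τ R) (hax : Occurs τ [a, x 0])
    (hx : x ∈ SigmaPlus τ) {c : ℕ → ℝ} (hc : Monotone c) {T : ℝ} (hT : 0 < T) {A : W}
    {v : List W} (hu : u ++ [A] ∈ WordSet τ m B A) (hv : v ++ [B] ∈ WordSet τ n A B) :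
    ∃ C : ℝ, 0 < C ∧ ∃ K : ℕ, ∀ (N : ℕ) (t : ℝ) (g : G), K < N → t ≤ T →
      (ENNReal.ofReal C)⁻¹ * phiLe τ R s A a x c t (N - K) ((wprod s u)⁻¹ * g) ≤
          phiLe τ R s B a x c t N g ∧
        phiLe τ R s B a x c t N g ≤
          ENNReal.ofReal C * phiLe τ R s A a x c t (N + K) (wprod s v * g) := by
  obtain ⟨C₁, hC₁, lower⟩ := exists_inv_mul_phiLe_le_phiLe (s := s) hR hax hx hc hT hu
  obtain ⟨C₂, hC₂, upper⟩ := exists_inv_mul_phiLe_le_phiLe (s := s) hR hax hx hc hT hv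
  refine ⟨max C₁ C₂, lt_max_of_lt_left hC₁, u.length + v.length, fun N t g hN htT => ⟨?_, ?_⟩⟩
  · calc (ENNReal.ofReal (max C₁ C₂))⁻¹ *
          phiLe τ R s A a x c t (N - (u.length + v.length)) ((wprod s u)⁻¹ * g)
        ≤ (ENNReal.ofReal C₁)⁻¹ *
          phiLe τ R s A a x c t (N - (u.length + v.length)) ((wprod s u)⁻¹ * g) := by
          gcongr
          exact le_max_left _ _
      _ ≤ phiLe τ R s B a x c t (N - (u.length + v.length) + u.length) g := by
          simpa only [mul_inv_cancel_left] using lower _ t ((wprod s u)⁻¹ * g) htT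
      _ ≤ phiLe τ R s B a x c t N g := phiLe_mono _ _ _ _ _ _ _ _ _ (by omega)
  · calc phiLe τ R s B a x c t N g
        ≤ ENNReal.ofReal C₂ * phiLe τ R s A a x c t (N + v.length) (wprod s v * g) :=
          (ENNReal.inv_mul_le_iff (ENNReal.ofReal_pos.2 hC₂).ne' ENNReal.ofReal_ne_top).1
            (upper N t g htT)
      _ ≤ ENNReal.ofReal (max C₁ C₂) *
          phiLe τ R s A a x c t (N + (u.length + v.length)) (wprod s v * g) := by
          gcongr
          · exact le_max_right _ _
          · exact phiLe_mono _ _ _ _ _ _ _ _ _ (by omega)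

end Density

theorem statement7_general {W G : Type*} [Group G]
    (τ : W → W → Prop) (R : (ℕ → W) → ℝ) (s : W → G) (hR : BoundedBelowOnCylinders τ R)
    (a : W) (x : ℕ → W) (hx : x ∈ SigmaPlus τ) (hax : Occurs τ [a, x 0])
    (c : ℕ → ℝ≥0) (hc : Monotone c) (T : ℝ) (hT : 0 < T) :
    (TopTransitive τ → ∀ A B : W,
      ∃ Const : ℝ, 0 < Const ∧ ∃ K : ℕ, ∃ hB gB : G,
        ∀ N : ℕ, ∀ t : ℝ, ∀ g : G, K < N → 0 < t → t ≤ T →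
          (ENNReal.ofReal Const)⁻¹ * phiLe τ R s A a x (fun n => c n) t (N - K) (hB⁻¹ * g)
              ≤ phiLe τ R s B a x (fun n => c n) t N g ∧
            phiLe τ R s B a x (fun n => c n) t N g
              ≤ ENNReal.ofReal Const *
                phiLe τ R s A a x (fun n => c n) t (N + K) (gB⁻¹ * g)) ∧
    (ExtTransitive τ s → ∀ A B : W,
      ∃ Const : ℝ, 0 < Const ∧ ∃ K : ℕ,
        ∀ N : ℕ, ∀ t : ℝ, ∀ g : G, K < N → 0 < t → t ≤ T →
          (ENNReal.ofReal Const)⁻¹ * phiLe τ R s A a x (fun n => c n) t (N - K) g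
              ≤ phiLe τ R s B a x (fun n => c n) t N g ∧
            phiLe τ R s B a x (fun n => c n) t N g
              ≤ ENNReal.ofReal Const * phiLe τ R s A a x (fun n => c n) t (N + K) g) := by
  have hc' : Monotone fun n => (c n : ℝ) := NNReal.coe_mono.comp hc
  constructor
  · intro hτ A B
    obtain ⟨m, u, hu⟩ := hτ.exists_append_mem_wordSet B A
    obtain ⟨n, v, hv⟩ := hτ.exists_append_mem_wordSet A B
    obtain ⟨C, hC, K, h⟩ := exists_phiLe_comparison (s := s) hR hax hx hc' hT hu hv
    refine ⟨C, hC, K, wprod s u, (wprod s v)⁻¹, fun N t g hN _ htT => ?_⟩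
    simpa only [inv_inv] using h N t g hN htT
  · intro hs A B
    obtain ⟨m, u, hu, hsu⟩ := hs.exists_append_mem_wordSet B A 1
    obtain ⟨n, v, hv, hsv⟩ := hs.exists_append_mem_wordSet A B 1
    obtain ⟨C, hC, K, h⟩ := exists_phiLe_comparison (s := s) hR hax hx hc' hT hu hv
    refine ⟨C, hC, K, fun N t g hN _ htT => ?_⟩
    simpa only [hsu, hsv, inv_one, one_mul] using h N t g hN htT

/-- (Lemma `lemma:changeletter`.) Comparison of the thermodynamic
densities `φ^{B,a}_{c;≤N}[t]` and `φ^{A,a}_{c;≤N}[t]` up to a constant, a shift of the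
truncation index and a group translation; under transitivity of `T_𝔰` the group
translations may be taken trivial. -/
theorem statement7 {W G : Type*} [Countable W] [Countable G] [Group G]
    (τ : W → W → Prop) (R : (ℕ → W) → ℝ) (s : W → G)
    (hmix : Mixing τ)
    (hRpos : ∀ x ∈ SigmaPlus τ, 0 < R x)
    (hHolder : ∃ C₀ θ : ℝ, LocallyHolder τ R C₀ θ)
    (A a : W) (x : ℕ → W)
    (hx : x ∈ SigmaPlus τ) (hxA : x 0 = A) (haA : Occurs τ [a, A])
    (c : ℕ → ℝ) (hcpos : ∀ n, 0 < c n) (hcmono : Monotone c)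
    (hcquot : ∀ k : ℕ, ∃ Ck : ℝ, ∀ n : ℕ, c (n + k) ≤ Ck * c n)
    (T : ℝ) (hT : 0 < T) :
    (∀ B : W, (∃ n : ℕ, (WordSet τ n B a).Nonempty) →
      ∃ Const : ℝ, 0 < Const ∧ ∃ K : ℕ, ∃ hB gB : G,
        ∀ N : ℕ, ∀ t : ℝ, ∀ g : G, K < N → 0 < t → t ≤ T →
          (ENNReal.ofReal Const)⁻¹ * phiLe τ R s A a x c t (N - K) (hB⁻¹ * g)
              ≤ phiLe τ R s B a x c t N g ∧
            phiLe τ R s B a x c t N g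
              ≤ ENNReal.ofReal Const * phiLe τ R s A a x c t (N + K) (gB⁻¹ * g)) ∧
    (ExtTransitive τ s →
      ∀ B : W, (∃ n : ℕ, (WordSet τ n B a).Nonempty) →
        ∃ Const : ℝ, 0 < Const ∧ ∃ K : ℕ,
          ∀ N : ℕ, ∀ t : ℝ, ∀ g : G, K < N → 0 < t → t ≤ T →
            (ENNReal.ofReal Const)⁻¹ * phiLe τ R s A a x c t (N - K) g
                ≤ phiLe τ R s B a x c t N g ∧
              phiLe τ R s B a x c t N g
                ≤ ENNReal.ofReal Const * phiLe τ R s A a x c t (N + K) g) := by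
  obtain ⟨C₀, θ, hH⟩ := hHolder
  lift c to ℕ → ℝ≥0 using fun n => (hcpos n).le
  have h := statement7_general τ R s (hH.boundedBelowOnCylinders hRpos) a x hx (hxA ▸ haA)
    c hcmono T hT
  exact ⟨fun B _ => h.1 hmix.topTransitive A B, fun hs B _ => h.2 hs A B⟩

end CMS
end

section
/- Let G be a countable amenable group, S=S⁻¹ a finite symmetric generating set of G such that the semigroup generated by S equals G, and p:S→(0,1] a symmetric probability on S (p(s)=p(s⁻¹), Σ_{s∈S}p(s)=1). Let λ be the left regular representation of G on ℓ²(G,ℝ). Then for every γ∈(0,1) there is a vector v∈ℓ²₊(G) and an integer M such that for every n≥M and every tuple (s₁,…,s_n)∈Sⁿ, ⟨λ(s₁s₂⋯s_n)v, v⟩ ≥ γⁿ. -/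
open scoped ENNReal NNReal BigOperators
open Filter MeasureTheory

namespace CMS

variable {W : Type*} {G : Type*}

/-!
Let `vₙ` be a unit vector that every product of `n` elements of `S` moves by at most `1`, so that
`⟨λ(g) vₙ, vₙ⟩ ≥ 1/2` for each such product `g`. The vector `v = (∑ₙ 2 γⁿ vₙ²)^{1/2}` lies in `ℓ²`
because the geometric series converges, and it dominates `√(2γⁿ) |vₙ|` pointwise for every `n`.
Diagonal matrix coefficients of a permutation representation are monotone on nonnegative vectors,
so `⟨λ(g) v, v⟩ ≥ 2 γⁿ ⟨λ(g) vₙ, vₙ⟩ ≥ γⁿ`.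
-/

open scoped Pointwise in
theorem list_prod_mem_finset_pow {M : Type*} [Monoid M] [DecidableEq M] {S : Finset M} {w : List M}
    (hw : ∀ u ∈ w, u ∈ S) : w.prod ∈ S ^ w.length := by
  induction w with
  | nil => simp
  | cons a t ih =>
    obtain ⟨ha, ht⟩ := List.forall_mem_cons.1 hw
    rw [List.prod_cons, List.length_cons, pow_succ']
    exact Finset.mul_mem_mul ha (ih ht)

section

variable {ι κ : Type*}

theorem summable_mul_of_summable_sq {f g : ι → ℝ} (hf : Summable fun i => f i ^ 2)
    (hg : Summable fun i => g i ^ 2) : Summable fun i => f i * g i := by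
  refine Summable.of_norm_bounded (hf.add hg) fun i => ?_
  have amgm := two_mul_le_add_sq |f i| |g i|
  rw [sq_abs, sq_abs] at amgm
  rw [Real.norm_eq_abs, abs_mul]
  linarith [mul_nonneg (abs_nonneg (f i)) (abs_nonneg (g i))]

theorem tsum_sub_sq {f g : ι → ℝ} (hf : Summable fun i => f i ^ 2)
    (hg : Summable fun i => g i ^ 2) :
    ∑' i, (f i - g i) ^ 2 = ∑' i, f i ^ 2 + ∑' i, g i ^ 2 - 2 * ∑' i, f i * g i := by
  have hfg := summable_mul_of_summable_sq hf hg
  rw [← tsum_mul_left, ← hf.tsum_add hg, ← (hf.add hg).tsum_sub (hfg.mul_left 2)]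
  exact tsum_congr fun i => by ring

theorem exists_summable_sq_forall_abs_le {u : κ → ι → ℝ} (hu : ∀ k, Summable fun i => u k i ^ 2)
    (hsum : Summable fun k => ∑' i, u k i ^ 2) :
    ∃ V : ι → ℝ, (∀ i, 0 ≤ V i) ∧ (Summable fun i => V i ^ 2) ∧ ∀ k i, |u k i| ≤ V i := by
  have hprod : Summable fun q : ι × κ => u q.2 q.1 ^ 2 :=
    ((summable_prod_of_nonneg fun q : κ × ι => sq_nonneg (u q.1 q.2)).2 ⟨hu, hsum⟩).prod_symm
  refine ⟨fun i => √(∑' k, u k i ^ 2), fun i => Real.sqrt_nonneg _, ?_, fun k i => ?_⟩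
  · simpa only [Real.sq_sqrt (tsum_nonneg fun k => sq_nonneg (u k _))] using hprod.prod
  · exact Real.abs_le_sqrt ((hprod.prod_factor i).le_tsum k fun j _ => sq_nonneg (u j i))

end

section

variable [Group G] {I : Type*} [MulAction G I]

/-- The diagonal matrix coefficient `⟨ρ(g) f, f⟩` of the permutation representation `ρ` of `G` on
`ℓ²(I, ℝ)`. The sum is only meaningful for square-summable `f`: it is `0` when it diverges. -/
noncomputable def diagCoeff (f : I → ℝ) (g : G) : ℝ :=
  ∑' i, f (g⁻¹ • i) * f i

theorem summable_comp_smul {E : Type*} [AddCommMonoid E] [TopologicalSpace E] {f : I → E}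
    (hf : Summable f) (g : G) : Summable fun i => f (g • i) :=
  (MulAction.toPerm g).summable_iff.2 hf

theorem tsum_sq_smul_sub {f : I → ℝ} (hf : Summable fun i => f i ^ 2) (g : G) :
    ∑' i, (f (g⁻¹ • i) - f i) ^ 2 = 2 * (∑' i, f i ^ 2 - diagCoeff f g) := by
  have hshift : ∑' i, f (g⁻¹ • i) ^ 2 = ∑' i, f i ^ 2 :=
    (MulAction.toPerm g⁻¹).tsum_eq fun i => f i ^ 2
  rw [tsum_sub_sq (summable_comp_smul hf g⁻¹) hf, hshift, diagCoeff]
  ring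

theorem diagCoeff_const_mul (c : ℝ) (f : I → ℝ) (g : G) :
    diagCoeff (fun i => c * f i) g = c ^ 2 * diagCoeff f g := by
  rw [diagCoeff, diagCoeff, ← tsum_mul_left]
  exact tsum_congr fun i => by ring

theorem diagCoeff_le_of_abs_le {f V : I → ℝ} (hV : Summable fun i => V i ^ 2)
    (hfV : ∀ i, |f i| ≤ V i) (g : G) : diagCoeff f g ≤ diagCoeff V g := by
  have hf : Summable fun i => f i ^ 2 :=
    .of_nonneg_of_le (fun i => sq_nonneg (f i))
      (fun i => sq_le_sq.2 ((hfV i).trans (le_abs_self _))) hV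
  have summable_coeff {h : I → ℝ} (hh : Summable fun i => h i ^ 2) :
      Summable fun i => h (g⁻¹ • i) * h i :=
    summable_mul_of_summable_sq (summable_comp_smul hh g⁻¹) hh
  refine (summable_coeff hf).tsum_le_tsum (fun i => ?_) (summable_coeff hV)
  calc f (g⁻¹ • i) * f i ≤ |f (g⁻¹ • i)| * |f i| := (le_abs_self _).trans (abs_mul _ _).le
    _ ≤ V (g⁻¹ • i) * V i :=
      mul_le_mul (hfV _) (hfV _) (abs_nonneg _) ((abs_nonneg _).trans (hfV _))

theorem HasAlmostInvariantVectors.exists_half_le_diagCoeff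
    (h : HasAlmostInvariantVectors fun (g : G) (i : I) => g • i) (F : Finset G) :
    ∃ f : I → ℝ, (Summable fun i => f i ^ 2) ∧ ∑' i, f i ^ 2 = 1 ∧
      ∀ g ∈ F, 1 / 2 ≤ diagCoeff f g := by
  obtain ⟨f, hf, hnorm, hinv⟩ := h F 1 one_pos
  refine ⟨f, hf, hnorm, fun g hg => ?_⟩
  have hdist := hinv g hg
  rw [tsum_sq_smul_sub hf, hnorm] at hdist
  linarith

theorem HasAlmostInvariantVectors.exists_nonneg_le_diagCoeff {κ : Type*}
    (h : HasAlmostInvariantVectors fun (g : G) (i : I) => g • i) (F : κ → Finset G)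
    {c : κ → ℝ} (hc : ∀ k, 0 ≤ c k) (hcsum : Summable c) :
    ∃ V : I → ℝ, (∀ i, 0 ≤ V i) ∧ (Summable fun i => V i ^ 2) ∧
      ∀ k, ∀ g ∈ F k, c k ≤ diagCoeff V g := by
  choose f hf hnorm hcoeff using fun k => h.exists_half_le_diagCoeff (F k)
  let u : κ → I → ℝ := fun k i => √(2 * c k) * f k i
  have hsqrt (k : κ) : √(2 * c k) ^ 2 = 2 * c k := Real.sq_sqrt (by linarith [hc k])
  have hu_sq (k : κ) : (fun i => u k i ^ 2) = fun i => 2 * c k * f k i ^ 2 := by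
    simp only [u, mul_pow, hsqrt]
  have hu (k : κ) : Summable fun i => u k i ^ 2 := hu_sq k ▸ (hf k).mul_left _
  have hu_norm : Summable fun k => ∑' i, u k i ^ 2 := by
    simpa only [hu_sq, tsum_mul_left, hnorm, mul_one] using hcsum.mul_left 2
  obtain ⟨V, hV, hVsq, hle⟩ := exists_summable_sq_forall_abs_le hu hu_norm
  refine ⟨V, hV, hVsq, fun k g hg => ?_⟩
  calc c k = 2 * c k * (1 / 2) := by ring
    _ ≤ 2 * c k * diagCoeff (f k) g :=
      mul_le_mul_of_nonneg_left (hcoeff k g hg) (by linarith [hc k])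
    _ = diagCoeff (u k) g := by rw [diagCoeff_const_mul, hsqrt]
    _ ≤ diagCoeff V g := diagCoeff_le_of_abs_le hVsq (hle k) g

open scoped Pointwise in
theorem statement11_general (h : HasAlmostInvariantVectors fun (g : G) (i : I) => g • i)
    (S : Finset G) {γ : ℝ} (hγ₀ : 0 ≤ γ) (hγ₁ : γ < 1) :
    ∃ v : I → ℝ, (∀ i, 0 ≤ v i) ∧ (Summable fun i => v i ^ 2) ∧
      ∀ w : List G, (∀ u ∈ w, u ∈ S) → γ ^ w.length ≤ ∑' i, v (w.prod⁻¹ • i) * v i := by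
  classical
  obtain ⟨v, hv, hvsq, hle⟩ := h.exists_nonneg_le_diagCoeff (fun n : ℕ => S ^ n)
    (fun n => pow_nonneg hγ₀ n) (summable_geometric_of_lt_one hγ₀ hγ₁)
  exact ⟨v, hv, hvsq, fun w hw => hle w.length w.prod (list_prod_mem_finset_pow hw)⟩

end

/-- (Lemma `lemma:amenablevectordecay`.) For an amenable group
with a finite symmetric generating set `S` generating `G` as a semigroup and a
symmetric probability `p` on `S`: for every `γ ∈ (0,1)` there are `v ∈ ℓ²₊(G)` and
`M` such that `⟨λ(s₁⋯s_n) v, v⟩ ≥ γⁿ` for all `n ≥ M` and all `(s₁,…,s_n) ∈ Sⁿ`. -/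
theorem statement11 {G : Type*} [Countable G] [Group G]
    (S : Finset G) (hSsym : ∀ g ∈ S, g⁻¹ ∈ S)
    (hgen : ∀ g : G, ∃ w : List G, w ≠ [] ∧ (∀ u ∈ w, u ∈ S) ∧ w.prod = g)
    (p : G → ℝ)
    (hppos : ∀ g ∈ S, 0 < p g) (hple : ∀ g ∈ S, p g ≤ 1)
    (hpsum : ∑ g ∈ S, p g = 1)
    (hpsym : ∀ g : G, p g = p g⁻¹)
    (hamen : Amenable G) :
    ∀ γ : ℝ, 0 < γ → γ < 1 →
      ∃ v : G → ℝ, (∀ g : G, 0 ≤ v g) ∧ Summable (fun g => v g ^ 2) ∧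
        ∃ M : ℕ, ∀ n, M ≤ n → ∀ w : List G, w.length = n → (∀ u ∈ w, u ∈ S) →
          γ ^ n ≤ ∑' z : G, v ((w.prod)⁻¹ * z) * v z := by
  intro γ hγ₀ hγ₁
  obtain ⟨v, hv, hvsq, hle⟩ := statement11_general (I := G) hamen S hγ₀.le hγ₁
  exact ⟨v, hv, hvsq, 0, fun n _ w hw hwS => hw ▸ hle w hwS⟩

end CMS
end

section
/- Let (B_n)_{n≥1} be a sequence of nonnegative reals with γ := limsup_{n→∞} B_n^{1/n} ∈ (0,∞). Then there exists c:ℕ→(0,∞) such that: (i) c is nondecreasing and c_n→∞; (ii) c_{n+k}/c_n → 1 as n→∞ for every fixed k (c is slowly increasing); (iii) c_{n+k} ≤ c_n·c_k for all n,k; (iv) Σ_{n=1}^∞ γ^{−n} c_n B_n = ∞; and (v) Σ_{n=1}^∞ t^{−n} c_n B_n < ∞ for every t>γ. -/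
open scoped ENNReal NNReal BigOperators
open Filter MeasureTheory

namespace CMS

variable {W : Type*} {G : Type*}

/- A slowly increasing submultiplicative sequence is built as `exp ∘ h`, where `h` is a monotone,
subadditive, unbounded sequence whose increments tend to `0`. Such an `h` is the sum of the
truncations `n ↦ 2⁻ʲ min(n, mⱼ)`: each is subadditive and eventually constant, so dominated
convergence gives vanishing increments, while `h(mⱼ) ≥ 2⁻ʲ mⱼ`. Since `γ⁻ⁿ Bₙ` does not decay
exponentially, `mⱼ` can be chosen so large that `2⁻ʲ mⱼ ≥ j` and `γ⁻ⁿ Bₙ ≥ exp(-2⁻ʲ n)` at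
`n = mⱼ`. Then the terms `γ⁻ⁿ exp(h(n)) Bₙ` are at least `1` infinitely often, whereas
`exp(h(n))` grows subexponentially and does not affect convergence for `t > γ`. -/

section TruncatedSum

variable {ι : Type*} {w : ι → ℝ}

/-- The weighted sum `∑ⱼ wⱼ min(n, mⱼ)` of truncations of the identity, the template for
subadditive sequences with vanishing increments. It is meaningful for summable weights `w`. -/
noncomputable def truncatedSum (w : ι → ℝ) (m : ι → ℕ) (n : ℕ) : ℝ :=
  ∑' j, w j * min (n : ℝ) (m j)

theorem summable_mul_min_natCast (hw : Summable w) (m : ι → ℕ) (n : ℕ) :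
    Summable fun j => w j * min (n : ℝ) (m j) := by
  refine Summable.of_norm_bounded (hw.norm.mul_right (n : ℝ)) fun j => ?_
  rw [norm_mul, Real.norm_of_nonneg (by positivity : 0 ≤ min (n : ℝ) (m j))]
  gcongr
  exact min_le_left _ _

theorem monotone_truncatedSum (hw : Summable w) (hw₀ : ∀ j, 0 ≤ w j) (m : ι → ℕ) :
    Monotone (truncatedSum w m) := by
  intro a b hab
  refine (summable_mul_min_natCast hw m a).tsum_le_tsum (fun j => ?_)
    (summable_mul_min_natCast hw m b)
  have := hw₀ j
  gcongr

theorem subadditive_truncatedSum (hw : Summable w) (hw₀ : ∀ j, 0 ≤ w j) (m : ι → ℕ) :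
    Subadditive (truncatedSum w m) := by
  intro a b
  have ha := summable_mul_min_natCast hw m a
  have hb := summable_mul_min_natCast hw m b
  rw [truncatedSum, truncatedSum, truncatedSum, ← ha.tsum_add hb]
  refine (summable_mul_min_natCast hw m (a + b)).tsum_le_tsum (fun j => ?_) (ha.add hb)
  have min_add_le : min (a + b) (m j) ≤ min a (m j) + min b (m j) := by omega
  rw [← mul_add]
  exact mul_le_mul_of_nonneg_left (mod_cast min_add_le) (hw₀ j)

theorem mul_min_le_truncatedSum (hw : Summable w) (hw₀ : ∀ j, 0 ≤ w j) (m : ι → ℕ) (n : ℕ)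
    (j : ι) : w j * min (n : ℝ) (m j) ≤ truncatedSum w m n :=
  (summable_mul_min_natCast hw m n).le_tsum j fun i _ => mul_nonneg (hw₀ i) (by positivity)

theorem mul_le_truncatedSum_self (hw : Summable w) (hw₀ : ∀ j, 0 ≤ w j) (m : ι → ℕ) (j : ι) :
    w j * m j ≤ truncatedSum w m (m j) := by
  simpa only [min_self] using mul_min_le_truncatedSum hw hw₀ m (m j) j

theorem tendsto_truncatedSum_atTop (hw : Summable w) (hw₀ : ∀ j, 0 ≤ w j) {m : ι → ℕ}
    {l : Filter ι} [l.NeBot] (hm : Tendsto (fun j => w j * m j) l atTop) :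
    Tendsto (truncatedSum w m) atTop atTop := by
  refine tendsto_atTop_atTop_of_monotone (monotone_truncatedSum hw hw₀ m) fun b => ?_
  obtain ⟨j, hj⟩ := (hm.eventually_ge_atTop b).exists
  exact ⟨m j, hj.trans (mul_le_truncatedSum_self hw hw₀ m j)⟩

theorem tendsto_truncatedSum_add_sub (hw : Summable w) (m : ι → ℕ) (k : ℕ) :
    Tendsto (fun n => truncatedSum w m (n + k) - truncatedSum w m n) atTop (nhds 0) := by
  suffices Tendsto (fun n : ℕ => ∑' j,
      (w j * min ((n + k : ℕ) : ℝ) (m j) - w j * min (n : ℝ) (m j))) atTop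
      (nhds (∑' _ : ι, (0 : ℝ))) by
    rw [tsum_zero] at this
    exact this.congr fun n =>
      (summable_mul_min_natCast hw m (n + k)).tsum_sub (summable_mul_min_natCast hw m n)
  refine tendsto_tsum_of_dominated_convergence (hw.norm.mul_right (k : ℝ)) (fun j => ?_)
    (Eventually.of_forall fun n j => ?_)
  · refine tendsto_const_nhds.congr' ?_
    filter_upwards [eventually_ge_atTop (m j)] with n hn
    have hnk : m j ≤ n + k := hn.trans (n.le_add_right k)
    rw [min_eq_right (mod_cast hnk), min_eq_right (mod_cast hn), sub_self]
  · have min_sub_min_le : |min ((n + k : ℕ) : ℝ) (m j) - min (n : ℝ) (m j)| ≤ k := by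
      simpa using abs_min_sub_min_le_max ((n + k : ℕ) : ℝ) (m j) n (m j)
    rw [← mul_sub, norm_mul, Real.norm_eq_abs (min _ _ - _)]
    gcongr

end TruncatedSum

section SlowlyIncreasing

theorem slowlyIncreasing_exp {h : ℕ → ℝ} (hmono : Monotone h) (htop : Tendsto h atTop atTop)
    (hincr : ∀ k, Tendsto (fun n => h (n + k) - h n) atTop (nhds 0)) :
    SlowlyIncreasing fun n => Real.exp (h n) := by
  refine ⟨fun n => Real.exp_pos _, Real.exp_monotone.comp hmono,
    Real.tendsto_exp_atTop.comp htop, fun k => ?_⟩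
  simpa only [Real.exp_sub, Real.exp_zero] using (hincr k).rexp

theorem exists_slowlyIncreasing_submultiplicative_frequently_one_le_mul {a : ℕ → ℝ}
    (ha : ∀ r, 0 < r → r < 1 → ∃ᶠ n in atTop, r ^ n ≤ a n) :
    ∃ c : ℕ → ℝ, SlowlyIncreasing c ∧ (∀ n k, c (n + k) ≤ c n * c k) ∧
      ∃ᶠ n in atTop, 1 ≤ c n * a n := by
  have exists_large (j : ℕ) : ∃ n : ℕ, j * 2 ^ j ≤ n ∧ Real.exp (-(1 / 2) ^ j) ^ n ≤ a n :=
    (frequently_atTop.1 <| ha _ (Real.exp_pos _) <|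
      Real.exp_lt_one_iff.2 (neg_lt_zero.2 (by positivity))) _
  choose m hm_large hm_le using exists_large
  have hw₀ (j : ℕ) : (0 : ℝ) ≤ (1 / 2) ^ j := by positivity
  have index_le (j : ℕ) : (j : ℝ) ≤ (1 / 2) ^ j * m j :=
    calc (j : ℝ) = (1 / 2) ^ j * (j * 2 ^ j : ℕ) := by
          push_cast; rw [mul_left_comm, ← mul_pow]; norm_num
      _ ≤ (1 / 2) ^ j * m j := by gcongr; exact hm_large j
  set h := truncatedSum (fun j => (1 / 2 : ℝ) ^ j) m
  have le_h (j : ℕ) : (1 / 2) ^ j * (m j : ℝ) ≤ h (m j) :=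
    mul_le_truncatedSum_self summable_geometric_two hw₀ m j
  have hmono : Monotone h := monotone_truncatedSum summable_geometric_two hw₀ m
  have htop : Tendsto h atTop atTop :=
    tendsto_truncatedSum_atTop summable_geometric_two hw₀ <|
      tendsto_atTop_mono index_le tendsto_natCast_atTop_atTop
  refine ⟨fun n => Real.exp (h n), slowlyIncreasing_exp hmono htop
    (tendsto_truncatedSum_add_sub summable_geometric_two m), fun n k => ?_,
    frequently_atTop.2 fun N => ⟨m N, ?_, ?_⟩⟩
  · rw [← Real.exp_add]
    exact Real.exp_le_exp.2 (subadditive_truncatedSum summable_geometric_two hw₀ m n k)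
  · exact (Nat.le_mul_of_pos_right N (by positivity)).trans (hm_large N)
  · calc (1 : ℝ) = Real.exp ((1 / 2) ^ N * m N) * Real.exp (-(1 / 2) ^ N) ^ m N := by
          rw [← Real.exp_nat_mul, ← Real.exp_add, ← Real.exp_zero]; ring_nf
      _ ≤ Real.exp (h (m N)) * a (m N) := by
          gcongr
          exacts [le_h N, hm_le N]

end SlowlyIncreasing

section RootTest

theorem frequently_pow_lt_of_lt_limsup {a : ℕ → ℝ≥0∞} {r : ℝ≥0∞}
    (h : r < limsup (fun n => a n ^ (1 / (n : ℝ))) atTop) : ∃ᶠ n in atTop, r ^ n < a n := by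
  refine ((frequently_lt_of_lt_limsup (by isBoundedDefault) h).and_eventually
    (eventually_gt_atTop 0)).mono fun n ⟨hn, hn₀⟩ => ?_
  rwa [one_div, ENNReal.lt_rpow_inv_iff (mod_cast hn₀), ENNReal.rpow_natCast] at hn

theorem eventually_lt_pow_of_limsup_lt {a : ℕ → ℝ≥0∞} {r : ℝ≥0∞}
    (h : limsup (fun n => a n ^ (1 / (n : ℝ))) atTop < r) : ∀ᶠ n in atTop, a n < r ^ n := by
  filter_upwards [eventually_lt_of_limsup_lt h (by isBoundedDefault), eventually_gt_atTop 0]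
    with n hn hn₀
  rwa [one_div, ENNReal.rpow_inv_lt_iff (mod_cast hn₀), ENNReal.rpow_natCast] at hn

theorem tsum_ofReal_eq_top_of_frequently_le {ι : Type*} {f : ι → ℝ} {ε : ℝ} (hε : 0 < ε)
    (h : ∃ᶠ i in cofinite, ε ≤ f i) : ∑' i, ENNReal.ofReal (f i) = ⊤ := by
  by_contra hne
  refine frequently_cofinite_iff_infinite.1 h ?_
  exact (ENNReal.finite_const_le_of_tsum_ne_top hne (ENNReal.ofReal_pos.2 hε).ne').subset
    fun i hi => ENNReal.ofReal_le_ofReal hi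

theorem summable_pow_mul_of_tendsto_ratio_one {𝕜 : Type*} [NormedField 𝕜] [CompleteSpace 𝕜]
    {c : ℕ → 𝕜} (hc : Tendsto (fun n => c (n + 1) / c n) atTop (nhds 1)) {r : 𝕜}
    (hr : ‖r‖ < 1) : Summable fun n => r ^ n * c n := by
  obtain ⟨q, hrq, hq⟩ := exists_between hr
  have ratio_tendsto : Tendsto (fun n => ‖r * (c (n + 1) / c n)‖) atTop (nhds ‖r‖) := by
    simpa only [mul_one] using (hc.const_mul r).norm
  refine summable_of_ratio_norm_eventually_le hq ?_
  filter_upwards [ratio_tendsto.eventually_lt_const hrq, hc.eventually_ne one_ne_zero]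
    with n hn hn₀
  have hcn : c n ≠ 0 := (div_ne_zero_iff.1 hn₀).2
  calc ‖r ^ (n + 1) * c (n + 1)‖ = ‖r * (c (n + 1) / c n) * (r ^ n * c n)‖ := by
        congr 1; field_simp; ring
    _ = ‖r * (c (n + 1) / c n)‖ * ‖r ^ n * c n‖ := norm_mul _ _
    _ ≤ q * ‖r ^ n * c n‖ := by gcongr

theorem summable_inv_pow_mul_mul_of_isBigO_pow {b c : ℕ → ℝ} {s t : ℝ}
    (hc : Tendsto (fun n => c (n + 1) / c n) atTop (nhds 1))
    (hb : b =O[atTop] fun n => s ^ n) (hst : |s| < t) :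
    Summable fun n => t⁻¹ ^ n * c n * b n := by
  have ht : 0 < t := (abs_nonneg s).trans_lt hst
  have ratio_lt_one : ‖s / t‖ < 1 := by
    rwa [Real.norm_eq_abs, abs_div, abs_of_pos ht, div_lt_one ht]
  refine summable_of_isBigO_nat (summable_pow_mul_of_tendsto_ratio_one hc ratio_lt_one) ?_
  refine ((Asymptotics.isBigO_refl (fun n => t⁻¹ ^ n * c n) atTop).mul hb).congr_right fun n => ?_
  rw [div_eq_mul_inv, mul_pow]
  ring

end RootTest

section GrowthRate

variable {B : ℕ → ℝ} {γ : ℝ}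

theorem frequently_pow_le_inv_pow_mul (hγpos : 0 < γ)
    (hγ : ENNReal.ofReal γ ≤ limsup (fun n => ENNReal.ofReal (B n) ^ (1 / (n : ℝ))) atTop)
    {r : ℝ} (hr₀ : 0 ≤ r) (hr : r < 1) : ∃ᶠ n in atTop, r ^ n ≤ γ⁻¹ ^ n * B n := by
  have hlt : ENNReal.ofReal (γ * r) < ENNReal.ofReal γ :=
    (ENNReal.ofReal_lt_ofReal_iff hγpos).2 (mul_lt_of_lt_one_right hγpos hr)
  refine (frequently_pow_lt_of_lt_limsup (hlt.trans_le hγ)).mono fun n hn => ?_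
  rw [← ENNReal.ofReal_pow (by positivity), ENNReal.ofReal_lt_ofReal_iff_of_nonneg (by positivity),
    mul_pow] at hn
  rw [inv_pow, le_inv_mul_iff₀ (by positivity)]
  exact hn.le

theorem isBigO_pow_of_limsup_lt (hB : ∀ n, 0 ≤ B n) {s : ℝ}
    (h : limsup (fun n => ENNReal.ofReal (B n) ^ (1 / (n : ℝ))) atTop < ENNReal.ofReal s) :
    B =O[atTop] fun n => s ^ n := by
  have hs : 0 < s := ENNReal.ofReal_pos.1 (bot_le.trans_lt h)
  refine Asymptotics.IsBigO.of_bound' ?_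
  filter_upwards [eventually_lt_pow_of_limsup_lt h] with n hn
  rw [← ENNReal.ofReal_pow hs.le, ENNReal.ofReal_lt_ofReal_iff_of_nonneg (hB n)] at hn
  rw [Real.norm_of_nonneg (hB n), Real.norm_of_nonneg (by positivity)]
  exact hn.le

end GrowthRate

/-- (Proposition `prop:divseries2`.) Given a nonnegative sequence
`B_n` with radius parameter `γ = limsup B_n^{1/n} ∈ (0,∞)`, there is a slowly
increasing, submultiplicative `c` making the series `Σ t^{-n} c_n B_n` diverge at
`t = γ` while still converging for every `t > γ`. -/
theorem statement13 (B : ℕ → ℝ) (hB : ∀ n, 0 ≤ B n)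
    (γ : ℝ) (hγpos : 0 < γ)
    (hγ : Filter.limsup (fun n => (ENNReal.ofReal (B n)) ^ (1 / (n : ℝ))) Filter.atTop
      = ENNReal.ofReal γ) :
    ∃ c : ℕ → ℝ,
      (∀ n, 0 < c n) ∧
      Monotone c ∧
      Tendsto c atTop atTop ∧
      (∀ k : ℕ, Tendsto (fun n => c (n + k) / c n) atTop (nhds 1)) ∧
      (∀ n k : ℕ, c (n + k) ≤ c n * c k) ∧
      (∑' n : ℕ, ENNReal.ofReal (γ⁻¹ ^ n * c n * B n)) = ⊤ ∧
      (∀ t : ℝ, γ < t → (∑' n : ℕ, ENNReal.ofReal (t⁻¹ ^ n * c n * B n)) < ⊤) := by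
  obtain ⟨c, hc, c_submul, one_le_frequently⟩ :=
    exists_slowlyIncreasing_submultiplicative_frequently_one_le_mul fun r hr₀ hr =>
      frequently_pow_le_inv_pow_mul hγpos hγ.ge hr₀.le hr
  obtain ⟨c_pos, c_mono, c_top, c_ratio⟩ := hc
  refine ⟨c, c_pos, c_mono, c_top, c_ratio, c_submul, ?_, fun t ht => ?_⟩
  · refine tsum_ofReal_eq_top_of_frequently_le one_pos ?_
    rw [Nat.cofinite_eq_atTop]
    simpa only [mul_left_comm, mul_assoc] using one_le_frequently
  · obtain ⟨s, hγs, hst⟩ := exists_between ht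
    have hs : 0 < s := hγpos.trans hγs
    have hB_isBigO : B =O[atTop] fun n => s ^ n :=
      isBigO_pow_of_limsup_lt hB (hγ.trans_lt ((ENNReal.ofReal_lt_ofReal_iff hs).2 hγs))
    exact (summable_inv_pow_mul_mul_of_isBigO_pow (c_ratio 1) hB_isBigO
      (by rwa [abs_of_pos hs])).tsum_ofReal_lt_top

end CMS
end

section
/- Let f∈𝓗₊, f≠0, with γ := γ(φ∗_ρ f) ∈ (0,∞). Then there is a slowly increasing c:ℕ→(0,∞) such that sup_N ‖φ_{c;≤N}[t]∗_ρ f‖² < ∞ for every t>γ, and sup_N ‖φ_{c;≤N}[t]∗_ρ f‖² → ∞ as t decreases to γ. -/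
open scoped ENNReal NNReal BigOperators
open Filter MeasureTheory

namespace CMS

variable {W : Type*} {G : Type*}

/-!
For `n ≥ 1` let `u_n` be the vector `ψ_n ∗_ρ f`, where `ψ_n` collects the words of length `n`. The
vectors `φ_{c;≤N}[t] ∗_ρ f` are then the partial sums of the series `∑ t⁻ⁿ c_n u_n` of nonnegative
vectors, and all that matters about the squared norm is that on nonnegative vectors it is monotone,
homogeneous, and lower semicontinuous under coordinatewise convergence.

A slowly increasing `c` grows more slowly than every geometric sequence, so inserting it leaves the
series bounded to the right of the critical exponent `γ`. To force divergence at `γ` itself, use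
that the unweighted series diverges at `γ exp(-1/(k+1))` for every `k`. The partial sum
up to some `M k` there has squared norm larger than `k`, and `c` is chosen to dominate
`exp(n/(k+1))` for `n ≤ M k`, by letting the increments of `log c` tend to zero slowly enough. The supremum of the squared
norms is lower semicontinuous in `t`, so divergence at `γ` gives divergence as `t ↓ γ`.
-/

section SlowlyIncreasing

theorem slowlyIncreasing_exp_sum {δ : ℕ → ℝ} (hδ_nonneg : ∀ i, 0 ≤ δ i)
    (hδ_zero : Tendsto δ atTop (nhds 0))
    (hδ_sum : Tendsto (fun n => ∑ i ∈ Finset.range n, δ i) atTop atTop) :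
    SlowlyIncreasing fun n => Real.exp (∑ i ∈ Finset.range n, δ i) := by
  refine ⟨fun n => Real.exp_pos _, fun m n hmn => ?_, Real.tendsto_exp_atTop.comp hδ_sum,
    fun k => ?_⟩
  · exact Real.exp_le_exp.2 <| Finset.sum_le_sum_of_subset_of_nonneg (Finset.range_mono hmn)
      fun i _ _ => hδ_nonneg i
  · have h_block : Tendsto (fun n => ∑ i ∈ Finset.range k, δ (n + i)) atTop (nhds 0) := by
      simpa using tendsto_finsetSum (Finset.range k) fun i _ =>
        hδ_zero.comp (tendsto_add_atTop_nat i)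
    simpa only [← Real.exp_sub, Finset.sum_range_add, add_sub_cancel_left, Real.exp_zero,
      Function.comp_def] using (Real.continuous_exp.tendsto 0).comp h_block

theorem SlowlyIncreasing.exists_le_mul_pow {c : ℕ → ℝ} (hc : SlowlyIncreasing c) {r : ℝ}
    (hr : 1 < r) : ∃ C, 0 ≤ C ∧ ∀ n, c n ≤ C * r ^ n := by
  obtain ⟨hc_pos, -, -, hc_ratio⟩ := hc
  have hr0 : 0 < r := one_pos.trans hr
  have h_pos (n : ℕ) : 0 < c n / r ^ n := div_pos (hc_pos n) (pow_pos hr0 n)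
  have h_ratio : Tendsto (fun n => ‖c (n + 1) / r ^ (n + 1)‖ / ‖c n / r ^ n‖) atTop
      (nhds (1 / r)) := by
    refine ((hc_ratio 1).div_const r).congr fun n => ?_
    rw [Real.norm_of_nonneg (h_pos _).le, Real.norm_of_nonneg (h_pos _).le]
    have := (hc_pos n).ne'
    rw [pow_succ]
    field_simp
  have h_summable : Summable fun n => c n / r ^ n :=
    summable_of_ratio_test_tendsto_lt_one ((div_lt_one hr0).2 hr)
      (.of_forall fun n => (h_pos n).ne') h_ratio
  exact ⟨∑' n, c n / r ^ n, tsum_nonneg fun n => (h_pos n).le, fun n =>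
    (div_le_iff₀ (pow_pos hr0 n)).1 (h_summable.le_tsum n fun i _ => (h_pos i).le)⟩

theorem exists_tendsto_atTop_le_of_lt (M : ℕ → ℕ) :
    ∃ κ : ℕ → ℕ, Tendsto κ atTop atTop ∧ (∀ i, κ i ≤ i) ∧ ∀ k i, i < M k → κ i ≤ k := by
  classical
  have h_ex (i : ℕ) : ∃ k, i ≤ k ∨ i < M k := ⟨i, Or.inl le_rfl⟩
  refine ⟨fun i => Nat.find (h_ex i), tendsto_atTop.2 fun b => ?_,
    fun i => Nat.find_min' _ (Or.inl le_rfl), fun k i hi => Nat.find_min' _ (Or.inr hi)⟩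
  have h_large : ∀ᶠ i in atTop, ∀ k ∈ Finset.range b, k < i ∧ M k ≤ i :=
    (Finset.eventually_all _).2 fun k _ => (eventually_gt_atTop k).and (eventually_ge_atTop (M k))
  filter_upwards [h_large] with i hi
  refine (Nat.le_find_iff _ _).2 fun k hk => ?_
  have := hi k (Finset.mem_range.2 hk)
  omega

theorem exists_slowlyIncreasing_exp_div_le (M : ℕ → ℕ) :
    ∃ c, SlowlyIncreasing c ∧ ∀ k n : ℕ, n ≤ M k → Real.exp (n / (k + 1)) ≤ c n := by
  obtain ⟨κ, hκ_top, hκ_le, hκM⟩ := exists_tendsto_atTop_le_of_lt M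
  have h_sum : Tendsto (fun n => ∑ i ∈ Finset.range n, 1 / ((κ i : ℝ) + 1)) atTop atTop := by
    refine tendsto_atTop_mono (fun n => Finset.sum_le_sum fun i _ => ?_)
      Real.tendsto_sum_range_one_div_nat_succ_atTop
    have := hκ_le i
    gcongr
  refine ⟨_, slowlyIncreasing_exp_sum (δ := fun i => 1 / ((κ i : ℝ) + 1)) (fun i => by positivity)
    (tendsto_one_div_add_atTop_nhds_zero_nat.comp hκ_top) h_sum, fun k n hn => ?_⟩
  refine Real.exp_le_exp.2 ?_
  calc (n : ℝ) / (k + 1) = ∑ i ∈ Finset.range n, 1 / ((k : ℝ) + 1) := by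
        simp [div_eq_mul_inv]
    _ ≤ ∑ i ∈ Finset.range n, 1 / ((κ i : ℝ) + 1) := by
        refine Finset.sum_le_sum fun i hi => ?_
        have := hκM k i ((Finset.mem_range.1 hi).trans_le hn)
        gcongr

end SlowlyIncreasing

section WeightedSum

variable {I : Type*}

/-- The `N`-th partial sum `∑_{n=1}^N b_n u_n` of a series of nonnegative vectors, given by their
coordinates. The index starts at `1` because `φ_{c;≤N}[t]` involves only words of length `≥ 1`. -/
noncomputable def weightedSum (b : ℕ → ℝ≥0∞) (u : ℕ → I → ℝ≥0∞) (N : ℕ) : I → ℝ≥0∞ :=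
  ∑ n ∈ Finset.Icc 1 N, b n • u n

/-- The coefficient sequence `n ↦ t⁻ⁿ c_n`, for `t > 0` and `c ≥ 0`. -/
noncomputable def dampedCoeff (c : ℕ → ℝ) (t : ℝ) (n : ℕ) : ℝ≥0∞ :=
  (ENNReal.ofReal t)⁻¹ ^ n * ENNReal.ofReal (c n)

/-- The supremum over `N` of the squared norms of the partial sums of `∑ t⁻ⁿ c_n u_n`. -/
noncomputable def supNormSq (u : ℕ → I → ℝ≥0∞) (c : ℕ → ℝ) (t : ℝ) : ℝ≥0∞ :=
  ⨆ N, normSqE (weightedSum (dampedCoeff c t) u N)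

/-- The critical exponent of the series `∑ t⁻ⁿ u_n`: the infimum of the `t > 0` at which its partial
sums are bounded in norm. As an infimum of reals it is `0` when there is no such `t`. -/
noncomputable def criticalExponent (u : ℕ → I → ℝ≥0∞) : ℝ :=
  sInf {t : ℝ | 0 < t ∧ supNormSq u (fun _ => 1) t < ⊤}

theorem normSqE_le_sq_mul {v w : I → ℝ≥0∞} {K : ℝ≥0∞} (h : v ≤ K • w) :
    normSqE v ≤ K ^ 2 * normSqE w := by
  simp only [normSqE, innerE]
  rw [← ENNReal.tsum_mul_left]
  refine ENNReal.tsum_le_tsum fun i => ?_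
  calc v i * v i ≤ (K * w i) * (K * w i) := mul_le_mul' (h i) (h i)
    _ = K ^ 2 * (w i * w i) := by ring

theorem normSqE_mono : Monotone (normSqE : (I → ℝ≥0∞) → ℝ≥0∞) := fun v w h => by
  simpa using normSqE_le_sq_mul (K := 1) (by simpa using h)

theorem weightedSum_mono_left {b b' : ℕ → ℝ≥0∞} (u : ℕ → I → ℝ≥0∞) {N : ℕ}
    (h : ∀ n ≤ N, b n ≤ b' n) : weightedSum b u N ≤ weightedSum b' u N :=
  Finset.sum_le_sum fun n hn i => mul_le_mul_left (h n (Finset.mem_Icc.1 hn).2) (u n i)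

theorem weightedSum_smul (K : ℝ≥0∞) (b : ℕ → ℝ≥0∞) (u : ℕ → I → ℝ≥0∞) (N : ℕ) :
    weightedSum (K • b) u N = K • weightedSum b u N := by
  simp only [weightedSum, Finset.smul_sum, Pi.smul_apply, smul_assoc]

theorem dampedCoeff_eq_ofReal (c : ℕ → ℝ) {t : ℝ} (ht : 0 < t) (n : ℕ) :
    dampedCoeff c t n = ENNReal.ofReal (c n / t ^ n) := by
  rw [dampedCoeff, ← ENNReal.ofReal_inv_of_pos ht, ← ENNReal.ofReal_pow (by positivity),
    ← ENNReal.ofReal_mul (by positivity), inv_pow, div_eq_inv_mul]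

theorem dampedCoeff_antitone (c : ℕ → ℝ) : Antitone (dampedCoeff c) := fun s t hst n => by
  unfold dampedCoeff
  gcongr

theorem supNormSq_le_sq_mul (u : ℕ → I → ℝ≥0∞) {c c' : ℕ → ℝ} {t t' : ℝ} {K : ℝ≥0∞}
    (h : dampedCoeff c t ≤ K • dampedCoeff c' t') :
    supNormSq u c t ≤ K ^ 2 * supNormSq u c' t' := by
  refine iSup_le fun N => ?_
  calc normSqE (weightedSum (dampedCoeff c t) u N)
      ≤ K ^ 2 * normSqE (weightedSum (dampedCoeff c' t') u N) :=
        normSqE_le_sq_mul <|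
          (weightedSum_mono_left u fun n _ => h n).trans_eq (weightedSum_smul K _ u N)
    _ ≤ K ^ 2 * supNormSq u c' t' :=
        mul_le_mul_right (le_iSup (fun N => normSqE (weightedSum (dampedCoeff c' t') u N)) N) _

theorem supNormSq_antitone (u : ℕ → I → ℝ≥0∞) (c : ℕ → ℝ) : Antitone (supNormSq u c) :=
  fun _ _ hst => iSup_mono fun _ =>
    normSqE_mono (weightedSum_mono_left u fun n _ => dampedCoeff_antitone c hst n)

theorem continuous_weightedSum_dampedCoeff (u : ℕ → I → ℝ≥0∞) (c : ℕ → ℝ) (N : ℕ) :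
    Continuous fun t => weightedSum (dampedCoeff c t) u N := by
  refine continuous_pi fun i => ?_
  simp only [weightedSum, dampedCoeff, Finset.sum_apply, Pi.smul_apply, smul_eq_mul, mul_assoc]
  refine continuous_finsetSum _ fun n _ => continuous_iff_continuousAt.2 fun t => ?_
  -- Multiplication by a possibly infinite constant is continuous away from `0`.
  have h_ne : (ENNReal.ofReal t)⁻¹ ^ n ≠ 0 :=
    pow_ne_zero n (ENNReal.inv_ne_zero.2 ENNReal.ofReal_ne_top)
  have h_pow : Continuous fun t => (ENNReal.ofReal t)⁻¹ ^ n :=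
    (ENNReal.continuous_pow n).comp (continuous_inv.comp ENNReal.continuous_ofReal)
  exact ENNReal.Tendsto.mul_const (h_pow.tendsto t) (Or.inl h_ne)

theorem lowerSemicontinuous_normSqE : LowerSemicontinuous (normSqE : (I → ℝ≥0∞) → ℝ≥0∞) := by
  refine lowerSemicontinuous_tsum fun i => Continuous.lowerSemicontinuous ?_
  simpa only [sq, Function.comp_def] using (ENNReal.continuous_pow 2).comp (continuous_apply i)

theorem lowerSemicontinuous_supNormSq (u : ℕ → I → ℝ≥0∞) (c : ℕ → ℝ) :
    LowerSemicontinuous (supNormSq u c) :=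
  lowerSemicontinuous_iSup fun N =>
    lowerSemicontinuous_normSqE.comp (continuous_weightedSum_dampedCoeff u c N)

theorem tendsto_supNormSq_nhds_top {u : ℕ → I → ℝ≥0∞} {c : ℕ → ℝ} {t : ℝ}
    (h : supNormSq u c t = ⊤) : Tendsto (supNormSq u c) (nhds t) (nhds ⊤) :=
  tendsto_order.2 ⟨fun y hy => lowerSemicontinuous_supNormSq u c t y (hy.trans_eq h.symm),
    fun _ hy => absurd hy not_top_lt⟩

end WeightedSum

section CriticalExponent

variable {I : Type*} {u : ℕ → I → ℝ≥0∞} {c : ℕ → ℝ} {s t : ℝ}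

theorem supNormSq_lt_top_of_criticalExponent_lt (hu : 0 < criticalExponent u)
    (ht : criticalExponent u < t) : supNormSq u (fun _ => 1) t < ⊤ := by
  have h_nonempty : {t : ℝ | 0 < t ∧ supNormSq u (fun _ => 1) t < ⊤}.Nonempty := by
    by_contra h_empty
    rw [criticalExponent, Set.not_nonempty_iff_eq_empty.1 h_empty, Real.sInf_empty] at hu
    exact hu.false
  obtain ⟨s, ⟨-, hs⟩, hst⟩ := exists_lt_of_csInf_lt h_nonempty ht
  exact (supNormSq_antitone u _ hst.le).trans_lt hs

theorem supNormSq_eq_top_of_lt_criticalExponent (ht : 0 < t) (htu : t < criticalExponent u) :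
    supNormSq u (fun _ => 1) t = ⊤ := by
  by_contra h_fin
  exact htu.not_ge (csInf_le ⟨0, fun _ hs => hs.1.le⟩ ⟨ht, lt_top_iff_ne_top.2 h_fin⟩)

theorem SlowlyIncreasing.supNormSq_lt_top (hc : SlowlyIncreasing c) (hs : 0 < s) (hst : s < t)
    (h : supNormSq u (fun _ => 1) s < ⊤) : supNormSq u c t < ⊤ := by
  have ht : 0 < t := hs.trans hst
  obtain ⟨C, hC, hcC⟩ := hc.exists_le_mul_pow ((one_lt_div hs).2 hst)
  refine (supNormSq_le_sq_mul (K := ENNReal.ofReal C) u fun n => ?_).trans_lt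
    (ENNReal.mul_lt_top (ENNReal.pow_lt_top ENNReal.ofReal_lt_top) h)
  rw [Pi.smul_apply, smul_eq_mul, dampedCoeff_eq_ofReal _ ht, dampedCoeff_eq_ofReal _ hs,
    ← ENNReal.ofReal_mul hC]
  refine ENNReal.ofReal_le_ofReal ?_
  calc c n / t ^ n ≤ C * (t / s) ^ n / t ^ n := by gcongr; exact hcC n
    _ = C * (1 / s ^ n) := by rw [div_pow]; field_simp

theorem exists_slowlyIncreasing_supNormSq_eq_top (ht : 0 < t)
    (h : ∀ s, 0 < s → s < t → supNormSq u (fun _ => 1) s = ⊤) :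
    ∃ c, SlowlyIncreasing c ∧ supNormSq u c t = ⊤ := by
  let s (k : ℕ) : ℝ := t * Real.exp (-(1 / (k + 1)))
  have hs_pos (k : ℕ) : 0 < s k := by positivity
  have hs_lt (k : ℕ) : s k < t :=
    mul_lt_of_lt_one_right ht (Real.exp_lt_one_iff.2 (neg_lt_zero.2 (by positivity)))
  have h_large (k : ℕ) : ∃ N, (k : ℝ≥0∞) <
      normSqE (weightedSum (dampedCoeff (fun _ => 1) (s k)) u N) :=
    lt_iSup_iff.1 ((ENNReal.natCast_lt_top k).trans_eq (h _ (hs_pos k) (hs_lt k)).symm)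
  choose M hM using h_large
  obtain ⟨c, hc, hMc⟩ := exists_slowlyIncreasing_exp_div_le M
  have h_coeff (k n : ℕ) (hn : n ≤ M k) :
      dampedCoeff (fun _ => 1) (s k) n ≤ dampedCoeff c t n := by
    rw [dampedCoeff_eq_ofReal _ (hs_pos k), dampedCoeff_eq_ofReal _ ht]
    refine ENNReal.ofReal_le_ofReal ?_
    calc 1 / s k ^ n = Real.exp (n / (k + 1)) / t ^ n := by
          rw [mul_pow, ← Real.exp_nat_mul, mul_neg, Real.exp_neg, mul_one_div]
          field_simp
      _ ≤ c n / t ^ n := by gcongr; exact hMc k n hn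
  refine ⟨c, hc, ENNReal.eq_top_of_forall_nnreal_le fun r => ?_⟩
  obtain ⟨k, hk⟩ := exists_nat_ge r
  calc (r : ℝ≥0∞) ≤ k := by exact_mod_cast hk
    _ ≤ normSqE (weightedSum (dampedCoeff (fun _ => 1) (s k)) u (M k)) := (hM k).le
    _ ≤ normSqE (weightedSum (dampedCoeff c t) u (M k)) :=
        normSqE_mono (weightedSum_mono_left u (h_coeff k))
    _ ≤ supNormSq u c t := le_iSup (fun N => normSqE (weightedSum (dampedCoeff c t) u N)) (M k)

theorem statement15_general (hu : 0 < criticalExponent u) :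
    ∃ c : ℕ → ℝ, SlowlyIncreasing c ∧ (∀ t, criticalExponent u < t → supNormSq u c t < ⊤) ∧
      Tendsto (supNormSq u c) (nhdsWithin (criticalExponent u) (Set.Ioi (criticalExponent u)))
        (nhds ⊤) := by
  obtain ⟨c, hc, hc_top⟩ := exists_slowlyIncreasing_supNormSq_eq_top hu fun _ =>
    supNormSq_eq_top_of_lt_criticalExponent
  refine ⟨c, hc, fun t ht => ?_, (tendsto_supNormSq_nhds_top hc_top).mono_left nhdsWithin_le_nhds⟩
  obtain ⟨s, hus, hst⟩ := exists_between ht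
  exact hc.supNormSq_lt_top (hu.trans hus) hst (supNormSq_lt_top_of_criticalExponent_lt hu hus)

end CriticalExponent

section Density

variable [Group G]

/-- The level-`n` density `g ↦ ∑ {R_n(wx) : w ∈ 𝒲_n^{B,a}, 𝔰̲(w) = g}`, of which
`φ^{B,a}_{c;≤N}[t]` is the weighted sum with coefficients `t⁻ⁿ c_n`. -/
noncomputable def wordDensity (τ : W → W → Prop) (R : (ℕ → W) → ℝ) (s : W → G) (B a : W)
    (x : ℕ → W) (n : ℕ) (g : G) : ℝ≥0∞ :=
  ∑' w : {w : List W // w ∈ WordSet τ n B a ∧ wprod s w = g},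
    ENNReal.ofReal (weight R n (cat w.1 x))

theorem phiLe_eq_weightedSum (τ : W → W → Prop) (R : (ℕ → W) → ℝ) (s : W → G) (B a : W)
    (x : ℕ → W) (c : ℕ → ℝ) (t : ℝ) (N : ℕ) :
    phiLe τ R s B a x c t N = weightedSum (dampedCoeff c t) (wordDensity τ R s B a x) N := by
  ext g
  simp only [phiLe, weightedSum, dampedCoeff, wordDensity, Finset.sum_apply, Pi.smul_apply,
    smul_eq_mul]

theorem convE_weightedSum {I : Type*} (act : G → I → I) (b : ℕ → ℝ≥0∞) (ψ : ℕ → G → ℝ≥0∞)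
    (f : I → ℝ≥0∞) (N : ℕ) :
    convE act (weightedSum b ψ N) f = weightedSum b (fun n => convE act (ψ n) f) N := by
  ext i
  simp only [convE, weightedSum, Finset.sum_apply, Pi.smul_apply, smul_eq_mul, Finset.sum_mul,
    mul_assoc, ← ENNReal.tsum_mul_left]
  exact Summable.tsum_finsetSum fun _ _ => ENNReal.summable

end Density

/-- (Lemma `lemma:cphiastastphi`.) For nonzero `f ∈ 𝓗₊` with
`γ = γ(φ ∗_ρ f) ∈ (0,∞)` there is a slowly increasing `c` such that
`sup_N ‖φ_{c;≤N}[t] ∗_ρ f‖² < ∞` for every `t > γ`, while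
`sup_N ‖φ_{c;≤N}[t] ∗_ρ f‖² → ∞` as `t ↓ γ`. -/
theorem statement15 {W G J : Type*} [Countable W] [Countable G] [Group G] [Countable J]
    (τ : W → W → Prop) (R : (ℕ → W) → ℝ) (s : W → G)
    (Hfam : J → Subgroup G)
    (hmix : Mixing τ)
    (hRpos : ∀ x ∈ SigmaPlus τ, 0 < R x)
    (hHolder : ∃ C₀ θ : ℝ, LocallyHolder τ R C₀ θ)
    (A a : W) (x : ℕ → W)
    (hx : x ∈ SigmaPlus τ) (hxA : x 0 = A) (haA : Occurs τ [a, A])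
    (f : (Σ j, G ⧸ Hfam j) → ℝ≥0∞) (hf : MemL2 f) (hf0 : f ≠ 0)
    (γv : ℝ) (hγv : γv = gammaNorm (rhoIdx Hfam) τ R s A a x f) (hγpos : 0 < γv) :
    ∃ c : ℕ → ℝ, SlowlyIncreasing c ∧
      (∀ t : ℝ, γv < t →
        (⨆ N, normSqE (convE (rhoIdx Hfam) (phiLe τ R s A a x c t N) f)) < ⊤) ∧
      Tendsto (fun t : ℝ =>
          ⨆ N, normSqE (convE (rhoIdx Hfam) (phiLe τ R s A a x c t N) f))
        (nhdsWithin γv (Set.Ioi γv)) (nhds ⊤) := by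
  simp only [gammaNorm, phiLe_eq_weightedSum, convE_weightedSum] at hγv ⊢
  subst hγv
  exact statement15_general hγpos

end CMS
end
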